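/- arXiv:math-ph/9905008 — 2 statements merged into one kernel-verified Lean document; each statement's English description precedes it below -/
import Mathlib

section
/- Let w ∈ W_α and let n ≥ 2 be such that |w| < |s_n|. Then w is a subword of s_{n+2}. -/
open scoped Classical

noncomputable section

/-- The Sturmian potential `v_{α,θ}(n) = χ_{[1-α,1)}(nα + θ mod 1)`. -/
def sturmian (α θ : ℝ) (n : ℤ) : ℝ :=
  if Int.fract (n * α + θ) ∈ Set.Ico (1 - α) 1 then 1 else 0

/-- Iterates of the Gauss map, starting at `α`. -/
def cfGauss (α : ℝ) : ℕ → ℝ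
  | 0 => α
  | n + 1 => Int.fract (cfGauss α n)⁻¹

/-- The continued fraction coefficients `a_n` of `α = [a_1, a_2, …]` (for `n ≥ 1`):
`a_1 = ⌊1/α⌋`, `a_2 = ⌊1/fract(1/α)⌋`, … . -/
def cfCoeff (α : ℝ) (n : ℕ) : ℕ := ⌊(cfGauss α (n - 1))⁻¹⌋₊

/-- The standard words, with an index shift: `sWord a n` is `s_{n-1}`.  Thus
`sWord a 0 = s_{-1} = 1`, `sWord a 1 = s_0 = 0`, `sWord a 2 = s_1 = 0^{a_1 - 1} 1`, and
`sWord a (n+1) = s_n = s_{n-1}^{a_n} s_{n-2}` for `n ≥ 2`. -/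
def sWord (a : ℕ → ℕ) : ℕ → List ℝ
  | 0 => [1]
  | 1 => [0]
  | 2 => List.replicate (a 1 - 1) (0 : ℝ) ++ [1]
  | n + 3 => (List.replicate (a (n + 2)) (sWord a (n + 2))).flatten ++ sWord a (n + 1)

/-- The `n`-th letter (for `n ≥ 1`) of the one-sided infinite word `c_α = lim s_n`:
since `|s_n| ≥ n`, it is the `n`-th letter of `s_n`. -/
def cword (α : ℝ) (n : ℕ) : ℝ := (sWord (cfCoeff α) (n + 1)).getD (n - 1) 0

/-- `w` is a (finite) prefix of the one-sided infinite word `c_α`. -/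
def IsPrefC (α : ℝ) (w : List ℝ) : Prop :=
  w = (List.range w.length).map fun i => cword α (i + 1)

/-- The one-step transfer matrix `T(λ,E,a) = [[E - λa, -1], [1, 0]]`. -/
def transferT (lam : ℝ) (E : ℂ) (a : ℝ) : Matrix (Fin 2) (Fin 2) ℂ :=
  !![E - lam * a, -1; 1, 0]

/-- The transfer matrix over a word `w = w_1 … w_n`:
`M(λ,E,w) = T(λ,E,w_n) ⋯ T(λ,E,w_1)`. -/
def transferM (lam : ℝ) (E : ℂ) : List ℝ → Matrix (Fin 2) (Fin 2) ℂ
  | [] => 1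
  | a :: w => transferM lam E w * transferT lam E a

/-- The operator norm on `ℂ²` (with the euclidean norm) of a `2 × 2` complex matrix. -/
def opNorm (A : Matrix (Fin 2) (Fin 2) ℂ) : ℝ :=
  ‖Matrix.toEuclideanCLM (𝕜 := ℂ) A‖

/-- The word `v_{α,θ}^n = v_{α,θ}(1) … v_{α,θ}(n)`. -/
def sturmianWord (α θ : ℝ) (n : ℕ) : List ℝ :=
  (List.range n).map fun k => sturmian α θ (k + 1)

/-- The set of finite nonempty subwords of a two-sided sequence `v : ℤ → ℝ`. -/
def SubZ (v : ℤ → ℝ) : Set (List ℝ) :=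
  {w | w ≠ [] ∧ ∃ k : ℤ, w = (List.range w.length).map fun i => v (k + i)}

/-- The set of finite nonempty subwords of the one-sided word `c_α` (indexed from `1`). -/
def SubC (α : ℝ) : Set (List ℝ) :=
  {w | w ≠ [] ∧ ∃ k : ℕ, 1 ≤ k ∧ w = (List.range w.length).map fun i => cword α (k + i)}

/-- `W_α`, the set of all finite nonempty subwords of the sequences `v_{α,θ}`, `θ ∈ [0,1)`. -/
def Walpha (α : ℝ) : Set (List ℝ) :=
  {w | ∃ θ ∈ Set.Ico (0 : ℝ) 1, w ∈ SubZ (sturmian α θ)}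

/-- `α` is a bounded density number: `limsup_{n→∞} (1/n) ∑_{j=1}^n a_j < ∞` for the
continued fraction coefficients `a_j` of `α`. -/
def BoundedDensity (α : ℝ) : Prop :=
  Filter.IsBoundedUnder (· ≤ ·) Filter.atTop
    (fun n : ℕ => (1 / n : ℝ) * ∑ j ∈ Finset.Icc 1 n, (cfCoeff α j : ℝ))

end

def wd (f : ℤ → ℝ) (k : ℤ) (L : ℕ) : List ℝ := (List.range L).map fun i : ℕ => f (k + (i : ℤ))

lemma wd_add (f : ℤ → ℝ) (k : ℤ) (L M : ℕ) : wd f k (L + M) = wd f k L ++ wd f (k + L) M := by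
  simp only [wd, List.range_add, List.map_append, List.map_map]
  congr 1
  apply List.map_congr_left
  intro i _
  simp [add_assoc]

lemma wd_one (f : ℤ → ℝ) (k : ℤ) : wd f k 1 = [f k] := by simp [wd]

lemma wd_infix (f : ℤ → ℝ) (k k' : ℤ) (L M : ℕ) (h1 : k' ≤ k) (h2 : k + L ≤ k' + M) :
    wd f k L <:+: wd f k' M := by
  obtain ⟨p, rfl⟩ : ∃ p : ℕ, k = k' + p := ⟨(k - k').toNat, by omega⟩
  obtain ⟨q, rfl⟩ : ∃ q : ℕ, M = p + L + q := ⟨M - (p + L), by omega⟩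
  rw [wd_add, wd_add]
  exact ⟨_, _, rfl⟩

lemma wd_const (f : ℤ → ℝ) (k : ℤ) (L : ℕ) (c : ℝ) (h : ∀ n, k ≤ n → n < k + L → f n = c) :
    wd f k L = List.replicate L c := by
  rw [wd, List.eq_replicate_iff]
  refine ⟨by simp, ?_⟩
  intro b hb
  simp only [List.mem_map, List.mem_range] at hb
  obtain ⟨i, hi, rfl⟩ := hb
  exact h _ (by omega) (by omega)

lemma sturmian_floor (α θ : ℝ) (h0 : 0 < α) (h1 : α < 1) (n : ℤ) :
    sturmian α θ n = if ⌊(n : ℝ) * α + θ⌋ < ⌊((n + 1 : ℤ) : ℝ) * α + θ⌋ then 1 else 0 := by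
  unfold sturmian
  have e : ((n + 1 : ℤ) : ℝ) * α + θ = (n * α + θ) + α := by push_cast; ring
  rw [e]
  generalize (n : ℝ) * α + θ = x
  congr 1
  have hx := Int.fract_lt_one x
  have hf : Int.fract x = x - ⌊x⌋ := rfl
  rw [eq_iff_iff, Set.mem_Ico, Int.lt_iff_add_one_le, Int.le_floor]
  push_cast
  constructor
  · rintro ⟨h, _⟩; linarith
  · intro h; exact ⟨by linarith, hx⟩

def Gen (α θ : ℝ) : Prop := ∀ n m : ℤ, (n : ℝ) * α + θ ≠ m

noncomputable def psi (a : ℕ) (x : ℝ) : List ℝ :=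
  if x = 1 then 0 :: (List.replicate (a - 1) 0 ++ [1]) else List.replicate (a - 1) 0 ++ [1]

noncomputable def phi (a : ℕ) (x : ℝ) : List ℝ :=
  if x = 1 then (List.replicate (a - 1) 0 ++ [1]) ++ [0] else List.replicate (a - 1) 0 ++ [1]

lemma conj_psi_phi (a : ℕ) (u : List ℝ) :
    (List.replicate (a - 1) 0 ++ [1]) ++ u.flatMap (psi a)
      = u.flatMap (phi a) ++ (List.replicate (a - 1) 0 ++ [1]) := by
  induction u with
  | nil => simp
  | cons x u ih =>
    rw [List.flatMap_cons, List.flatMap_cons, List.append_assoc (phi a x), ← ih]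
    unfold psi phi
    split_ifs <;> simp

lemma phi_prefix (a : ℕ) (x : ℝ) : (List.replicate (a - 1) 0 ++ [1]) <+: phi a x := by
  unfold phi
  split_ifs
  · exact ⟨_, rfl⟩
  · exact List.prefix_rfl

lemma step (α θ : ℝ) (h0 : 0 < α) (h1 : α < 1) (hG0 : 0 < Int.fract α⁻¹) (hgen : Gen α θ) (k : ℤ) (L : ℕ) :
    ∃ θ', Gen (Int.fract α⁻¹) θ' ∧ ∃ k' L',
      wd (sturmian α θ) k L <:+:
        (wd (sturmian (Int.fract α⁻¹) θ') k' L').flatMap (phi ⌊α⁻¹⌋₊) := by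
  set G := Int.fract α⁻¹ with hG
  set a := ⌊α⁻¹⌋₊ with ha
  have hG1 : G < 1 := Int.fract_lt_one _
  have hinv : 1 < α⁻¹ := (one_lt_inv₀ h0).2 h1
  have ha1 : 1 ≤ a := Nat.le_floor (by simpa using hinv.le)
  have haZ : (a : ℤ) = ⌊α⁻¹⌋ := Int.natCast_floor_eq_floor (by positivity)
  have hsum : α⁻¹ = a + G := by
    have := Int.floor_add_fract α⁻¹
    rw [← haZ] at this
    push_cast at this
    linarith
  have hmul : α * (a + G) = 1 := by rw [← hsum]; exact mul_inv_cancel₀ h0.ne'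
  set θ' := -θ / α with hθ'
  have hθα : θ' * α = -θ := by rw [hθ']; field_simp
  set t : ℤ → ℤ := fun m => m * a + ⌊(m : ℝ) * G + θ'⌋ with ht
  have key : ∀ n m : ℤ, n ≤ t m ↔ ⌊(n : ℝ) * α + θ⌋ < m := by
    intro n m
    rw [Int.floor_lt, ht]
    simp only
    rw [← Int.floor_intCast_add, Int.le_floor]
    push_cast
    have e : α * ((m : ℝ) * a + (m * G + θ')) = m - θ := by
      linear_combination (m : ℝ) * hmul + hθα
    rw [← mul_le_mul_iff_right₀ h0, e]
    have := hgen n m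
    constructor
    · intro h; exact lt_of_le_of_ne (by linarith) this
    · intro h; linarith
  have gap : ∀ m : ℤ, (sturmian G θ' m = 1 ∧ t (m + 1) = t m + a + 1) ∨
      (sturmian G θ' m = 0 ∧ t (m + 1) = t m + a) := by
    intro m
    rw [sturmian_floor G θ' hG0 hG1]
    have hle : ⌊(m : ℝ) * G + θ'⌋ ≤ ⌊((m + 1 : ℤ) : ℝ) * G + θ'⌋ := by
      apply Int.floor_mono; push_cast; linarith
    have hle2 : ⌊((m + 1 : ℤ) : ℝ) * G + θ'⌋ ≤ ⌊(m : ℝ) * G + θ'⌋ + 1 := by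
      rw [← Int.floor_add_one]
      apply Int.floor_mono; push_cast; linarith
    simp only [ht]
    split_ifs with h
    · left; refine ⟨rfl, ?_⟩
      have : ⌊((m + 1 : ℤ) : ℝ) * G + θ'⌋ = ⌊(m : ℝ) * G + θ'⌋ + 1 := by omega
      rw [this]; ring
    · right; refine ⟨rfl, ?_⟩
      have : ⌊((m + 1 : ℤ) : ℝ) * G + θ'⌋ = ⌊(m : ℝ) * G + θ'⌋ := by omega
      rw [this]; ring
  have blk : ∀ m : ℤ, ∀ g : ℕ, t (m + 1) = t m + g + 1 →
      wd (sturmian α θ) (t m + 1) (g + 1) = List.replicate g 0 ++ [1] := by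
    intro m g hg
    rw [wd_add, wd_one]
    congr 1
    · apply wd_const
      intro n hn1 hn2
      rw [sturmian_floor α θ h0 h1, if_neg]
      have A := (key n m).not.1 (by omega)
      have B := (key (n + 1) (m + 1)).1 (by omega)
      omega
    · rw [sturmian_floor α θ h0 h1, if_pos]
      have A := (key (t m + 1 + g) (m + 1)).1 (by omega)
      have B := (key (t m + 1 + g + 1) (m + 1)).not.1 (by omega)
      omega
  have run : ∀ m : ℤ, ∀ M : ℕ, ∃ N : ℕ, t (m + M) = t m + N ∧
      wd (sturmian α θ) (t m + 1) N = (wd (sturmian G θ') m M).flatMap (psi a) := by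
    intro m M
    induction M with
    | zero => exact ⟨0, by simp, by simp [wd]⟩
    | succ M ih =>
      obtain ⟨N, hN, hw⟩ := ih
      have hpt : t m + 1 + N = t (m + M) + 1 := by omega
      rcases gap (m + M) with ⟨hs, hgp⟩ | ⟨hs, hgp⟩
      · refine ⟨N + (a + 1), ?_, ?_⟩
        · push_cast; rw [← add_assoc, hgp]; omega
        · rw [wd_add, wd_add _ m M 1, List.flatMap_append, hw, hpt, blk (m + M) a (by omega), wd_one, hs]
          congr 1
          obtain ⟨b, hb⟩ : ∃ b, a = b + 1 := ⟨a - 1, by omega⟩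
          simp [psi, hb, List.replicate_succ]
      · obtain ⟨b, hb⟩ : ∃ b, a = b + 1 := ⟨a - 1, by omega⟩
        refine ⟨N + (b + 1), ?_, ?_⟩
        · push_cast; rw [← add_assoc, hgp]; omega
        · rw [wd_add, wd_add _ m M 1, List.flatMap_append, hw, hpt, blk (m + M) b (by omega), wd_one, hs]
          congr 1
          simp [psi, hb]
  refine ⟨θ', ?_, ?_⟩
  · intro n m h
    apply hgen (m + n * a) n
    push_cast
    linear_combination (n : ℝ) * hmul + hθα - α * h
  · set m := ⌊(k : ℝ) * α + θ⌋ with hm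
    have b1 := (key k m).not.2 (by omega)
    have b2 := (key (k + L) (m + (L + 1 : ℕ))).2 (by
      rw [Int.floor_lt]
      push_cast
      have := Int.lt_floor_add_one ((k : ℝ) * α + θ)
      have hL : (L : ℝ) * α ≤ L := mul_le_of_le_one_right (by positivity) h1.le
      rw [← hm] at this
      linarith)
    obtain ⟨N, hN, hw⟩ := run m (L + 1)
    refine ⟨m, L + 1 + 1, ?_⟩
    refine (wd_infix _ k (t m + 1) L N (by omega) (by omega)).trans ?_
    rw [hw, wd_add _ m (L + 1) 1, List.flatMap_append, wd_one]
    simp only [List.flatMap_cons, List.flatMap_nil, List.append_nil]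
    obtain ⟨r, hr⟩ := phi_prefix a (sturmian G θ' (m + (L + 1 : ℕ)))
    rw [← hr, ← List.append_assoc, ← conj_psi_phi]
    exact ⟨_, r, rfl⟩

lemma phi_sWord (a b : ℕ → ℕ) (hab : ∀ k, 1 ≤ k → b k = a (k + 1)) (h2 : 1 ≤ a 2) (n : ℕ) :
    (sWord b (n + 1)).flatMap (phi (a 1)) = sWord a (n + 2) := by
  have c0 : phi (a 1) 0 = sWord a 2 := by simp [phi, sWord]
  have c1 : phi (a 1) 1 = sWord a 2 ++ sWord a 1 := by simp [phi, sWord]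
  have rep : ∀ (N : ℕ) (u : List ℝ), ((List.replicate N u).flatten).flatMap (phi (a 1))
      = (List.replicate N (u.flatMap (phi (a 1)))).flatten := by
    intro N u
    induction N with
    | zero => simp
    | succ N ih => simp [List.replicate_succ, List.flatMap_append, ih]
  have main : ∀ n, (sWord b (n + 1)).flatMap (phi (a 1)) = sWord a (n + 2) ∧
      (sWord b (n + 2)).flatMap (phi (a 1)) = sWord a (n + 3) := by
    intro n
    induction n with
    | zero =>
      refine ⟨by simp [sWord, phi], ?_⟩
      have e : sWord b 2 = (List.replicate (b 1 - 1) [(0:ℝ)]).flatten ++ [1] := by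
        simp [sWord]
      show (sWord b 2).flatMap _ = sWord a (0 + 3)
      rw [e, List.flatMap_append, rep, hab 1 le_rfl]
      obtain ⟨c, hc⟩ : ∃ c, a 2 = c + 1 := ⟨a 2 - 1, by omega⟩
      have e3 : sWord a (0 + 3) = (List.replicate (a 2) (sWord a 2)).flatten ++ sWord a 1 := by
        show sWord a (0 + 3) = (List.replicate (a (0 + 2)) (sWord a (0 + 2))).flatten ++ sWord a (0 + 1)
        conv_lhs => rw [sWord]
      rw [e3, hc]
      simp only [List.flatMap_cons, List.flatMap_nil, List.append_nil, c0, c1]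
      simp only [hc, Nat.add_sub_cancel, Nat.reduceAdd]
      simp [List.replicate_succ']
    | succ n ih =>
      refine ⟨ih.2, ?_⟩
      show (sWord b (n + 3)).flatMap _ = sWord a ((n + 1) + 3)
      rw [sWord, List.flatMap_append, rep, ih.1, ih.2, hab _ (by omega)]
      conv_rhs => rw [sWord]
  exact (main n).1

lemma cfGauss_succ (α : ℝ) (k : ℕ) : cfGauss (Int.fract α⁻¹) k = cfGauss α (k + 1) := by
  induction k with
  | zero => rfl
  | succ k ih => rw [cfGauss, ih]; conv_rhs => rw [cfGauss]

lemma cfCoeff_succ (α : ℝ) (k : ℕ) (hk : 1 ≤ k) : cfCoeff (Int.fract α⁻¹) k = cfCoeff α (k + 1) := by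
  obtain ⟨j, rfl⟩ : ∃ j, k = j + 1 := ⟨k - 1, by omega⟩
  simp [cfCoeff, cfGauss_succ]

lemma gauss_irr (α : ℝ) (h : Irrational α) : Irrational (Int.fract α⁻¹) := by
  have := h.inv
  rw [Int.fract]
  exact this.sub_intCast _

lemma fract_pos_irr (α : ℝ) (h : Irrational α) : 0 < Int.fract α⁻¹ :=
  lt_of_le_of_ne (Int.fract_nonneg _) (gauss_irr α h).ne_zero.symm

lemma coeff_pos (k : ℕ) : ∀ (α : ℝ), Irrational α → 0 < α → α < 1 → 1 ≤ cfCoeff α (k + 1) := by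
  induction k with
  | zero =>
    intro α _ h0 h1
    exact Nat.le_floor (by simpa [cfGauss] using ((one_lt_inv₀ h0).2 h1).le)
  | succ k ih =>
    intro α h h0 h1
    rw [← cfCoeff_succ α (k + 1) (by omega)]
    exact ih _ (gauss_irr α h) (fract_pos_irr α h) (Int.fract_lt_one _)

def BlockList (a : ℕ → ℕ) (n : ℕ) (B : List (List ℝ)) : Prop :=
  ∀ b ∈ B, b = sWord a (n + 2) ∨ b = sWord a (n + 2) ++ sWord a (n + 1)

lemma flatMap_infix (u v : List ℝ) (f : ℝ → List ℝ) (h : u <:+: v) :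
    u.flatMap f <:+: v.flatMap f := by
  obtain ⟨x, y, rfl⟩ := h
  rw [List.flatMap_append, List.flatMap_append]
  exact ⟨_, _, rfl⟩

lemma blocks (n : ℕ) : ∀ (α θ : ℝ), Irrational α → 0 < α → α < 1 → Gen α θ → ∀ (k : ℤ) (L : ℕ),
    ∃ B, BlockList (cfCoeff α) n B ∧ wd (sturmian α θ) k L <:+: B.flatten := by
  induction n with
  | zero =>
    intro α θ h h0 h1 hg k L
    obtain ⟨θ', _, k', L', hw⟩ := step α θ h0 h1 (fract_pos_irr α h) hg k L
    refine ⟨(wd (sturmian (Int.fract α⁻¹) θ') k' L').map (phi ⌊α⁻¹⌋₊), ?_, ?_⟩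
    · intro b hb
      obtain ⟨x, _, rfl⟩ := List.mem_map.1 hb
      have : cfCoeff α 1 = ⌊α⁻¹⌋₊ := rfl
      unfold phi
      split_ifs
      · right; simp [sWord, this]
      · left; simp [sWord, this]
    · rw [← List.flatMap_def]; exact hw
  | succ n ih =>
    intro α θ h h0 h1 hg k L
    obtain ⟨θ', hg', k', L', hw⟩ := step α θ h0 h1 (fract_pos_irr α h) hg k L
    obtain ⟨B, hB, hw'⟩ := ih _ θ' (gauss_irr α h) (fract_pos_irr α h) (Int.fract_lt_one _) hg' k' L'
    have ps := phi_sWord (cfCoeff α) (cfCoeff (Int.fract α⁻¹)) (fun k hk => cfCoeff_succ α k hk)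
      (coeff_pos 1 α h h0 h1)
    have e1 : cfCoeff α 1 = ⌊α⁻¹⌋₊ := rfl
    rw [e1] at ps
    refine ⟨B.map (fun b => b.flatMap (phi ⌊α⁻¹⌋₊)), ?_, ?_⟩
    · intro b hb
      obtain ⟨x, hx, rfl⟩ := List.mem_map.1 hb
      rcases hB x hx with rfl | rfl
      · left; exact ps (n + 1)
      · right; rw [List.flatMap_append, ps (n + 1), ps n]
    · refine (hw.trans (flatMap_infix _ _ _ hw')).trans ?_
      have : ∀ B : List (List ℝ), B.flatten.flatMap (phi ⌊α⁻¹⌋₊)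
          = (B.map (fun b => b.flatMap (phi ⌊α⁻¹⌋₊))).flatten := by
        intro B
        induction B with
        | nil => rfl
        | cons b B ih => simp [List.flatMap_append, ih]
      rw [this]

lemma perturb (α θ : ℝ) (h0 : 0 < α) (h1 : α < 1) (k : ℤ) (L : ℕ) :
    ∃ θ', Gen α θ' ∧ wd (sturmian α θ) k L = wd (sturmian α θ') k L := by
  have A : ∀ x : ℝ, ∃ e > 0, ∀ d, 0 < d → d < e → ⌊x + d⌋ = ⌊x⌋ := by
    intro x
    refine ⟨⌊x⌋ + 1 - x, by linarith [Int.lt_floor_add_one x], ?_⟩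
    intro d hd hd2
    rw [Int.floor_eq_iff]
    exact ⟨by linarith [Int.floor_le x], by linarith⟩
  have B : ∀ M : ℕ, ∃ e > 0, ∀ d, 0 < d → d < e → ∀ i : ℕ, i < M →
      ⌊((k + i : ℤ) : ℝ) * α + (θ + d)⌋ = ⌊((k + i : ℤ) : ℝ) * α + θ⌋ := by
    intro M
    induction M with
    | zero => exact ⟨1, one_pos, by intros; omega⟩
    | succ M ih =>
      obtain ⟨e, he, H⟩ := ih
      obtain ⟨e', he', H'⟩ := A (((k + M : ℤ) : ℝ) * α + θ)
      refine ⟨min e e', lt_min he he', ?_⟩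
      intro d hd hd2 i hi
      rcases Nat.lt_succ_iff_lt_or_eq.1 hi with hi | rfl
      · exact H d hd (hd2.trans_le (min_le_left _ _)) i hi
      · rw [← add_assoc]; exact H' d hd (hd2.trans_le (min_le_right _ _))
  obtain ⟨e, he, H⟩ := B (L + 1)
  have hc : (Set.range (fun p : ℤ × ℤ => (p.2 : ℝ) - p.1 * α - θ)).Countable :=
    Set.countable_range _
  obtain ⟨d, hd, hd0, hd1⟩ := (hc.dense_compl ℝ).exists_between he
  refine ⟨θ + d, ?_, ?_⟩
  · intro n m h
    apply hd
    exact ⟨(n, m), by simp only; linarith⟩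
  · unfold wd
    apply List.map_congr_left
    intro i hi
    have hi := List.mem_range.1 hi
    rw [sturmian_floor α θ h0 h1, sturmian_floor α _ h0 h1]
    have e1 := H d hd0 hd1 i (by omega)
    have e2 := H d hd0 hd1 (i + 1) (by omega)
    push_cast at e1 e2 ⊢
    rw [← add_assoc (k : ℝ)] at e2
    rw [e1, e2]

lemma two_blocks (S T : List ℝ) (w : List ℝ) (hl : w.length < S.length) (B : List (List ℝ))
    (hB : ∀ b ∈ B, b = S ∨ b = S ++ T) (hw : w <:+: B.flatten ++ S) :
    w <:+: S ++ S ∨ w <:+: S ++ T ++ S := by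
  induction B with
  | nil => left; exact List.IsInfix.trans (by simpa using hw) ⟨[], S, by simp⟩
  | cons b B ih =>
    have hR : ∃ R', B.flatten ++ S = S ++ R' := by
      cases B with
      | nil => exact ⟨[], by simp⟩
      | cons c B =>
        rcases hB c (by simp) with rfl | rfl
        · exact ⟨B.flatten ++ c, by simp⟩
        · exact ⟨T ++ B.flatten ++ S, by simp⟩
    obtain ⟨x, y, hxy⟩ := hw
    rw [List.flatten_cons, List.append_assoc b] at hxy
    by_cases hx : b.length ≤ x.length
    · apply ih (fun c hc => hB c (List.mem_cons_of_mem _ hc))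
      have h2 : b <+: x := List.prefix_of_prefix_length_le ⟨_, rfl⟩
        (⟨w ++ y, by rw [← hxy]; simp⟩) hx
      obtain ⟨x', rfl⟩ := h2
      exact ⟨x', y, by simpa using hxy⟩
    · obtain ⟨R', hR'⟩ := hR
      rw [hR'] at hxy
      have h2 : x ++ w <+: b ++ S := List.prefix_of_prefix_length_le ⟨y, hxy⟩
        ⟨R', by simp⟩ (by simp; omega)
      have h3 : w <:+: b ++ S := (List.suffix_append x w).isInfix.trans h2.isInfix
      rcases hB b (by simp) with rfl | rfl
      · left; exact h3
      · right; exact h3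

lemma square (S w : List ℝ) (hl : w.length < S.length) (h : w <:+: S ++ S) :
    w <:+: S ++ S.dropLast := by
  obtain ⟨x, y, hxy⟩ := h
  by_cases hx : S.length ≤ x.length
  · have h2 : S <+: x := List.prefix_of_prefix_length_le ⟨_, rfl⟩
        (⟨w ++ y, by rw [← hxy]; simp⟩) hx
    obtain ⟨x', rfl⟩ := h2
    have : w <:+: S := ⟨x', y, by simpa using hxy⟩
    exact this.trans (List.prefix_append _ _).isInfix
  · have hS : S ≠ [] := by rintro rfl; simp at hl
    have hlen := congrArg List.length hxy
    simp at hlen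
    have hy : y ≠ [] := by rintro rfl; simp at hlen; omega
    refine ⟨x, y.dropLast, ?_⟩
    rw [← List.dropLast_append_of_ne_nil hS, ← List.dropLast_append_of_ne_nil hy, hxy]

lemma rep_comm (N : ℕ) (u : List ℝ) : u ++ (List.replicate N u).flatten
    = (List.replicate N u).flatten ++ u := by
  have h1 : (List.replicate (N + 1) u).flatten = u ++ (List.replicate N u).flatten := by
    simp [List.replicate_succ]
  have h2 : (List.replicate (N + 1) u).flatten = (List.replicate N u).flatten ++ u := by
    simp [List.replicate_succ']
  rw [← h1, h2]

lemma rep_suffix (N : ℕ) (hN : 1 ≤ N) (u v : List ℝ) :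
    u ++ v <:+ (List.replicate N u).flatten ++ v := by
  obtain ⟨c, rfl⟩ : ∃ c, N = c + 1 := ⟨N - 1, by omega⟩
  exact ⟨(List.replicate c u).flatten, by simp [List.replicate_succ']⟩

lemma dropLast_prefix (a : ℕ → ℕ) (ha : ∀ k, 1 ≤ a (k + 1)) (m : ℕ) :
    (sWord a (m + 3)).dropLast <+: sWord a (m + 2) ++ sWord a (m + 3) := by
  have hne : sWord a (m + 1) ≠ [] := by
    clear ha
    induction m using Nat.strong_induction_on with
    | _ m ih =>
      match m with
      | 0 => simp [sWord]
      | 1 => simp [sWord]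
      | j + 2 =>
        show sWord a (j + 3) ≠ []
        rw [sWord]
        simp only [ne_eq, List.append_eq_nil_iff, not_and]
        intro _
        exact ih j (by omega)
  rw [sWord, List.dropLast_append_of_ne_nil hne, ← List.append_assoc, rep_comm, List.append_assoc,
    List.prefix_append_right_inj]
  cases m with
  | zero => simp [sWord]
  | succ m =>
    have : sWord a (m + 1 + 1) <+: sWord a (m + 1 + 2) := by
      show sWord a (m + 2) <+: sWord a (m + 3)
      conv_rhs => rw [sWord]
      obtain ⟨c, hc⟩ : ∃ c, a (m + 2) = c + 1 := ⟨a (m + 2) - 1, by have : 1 ≤ a (m + 2) := ha (m + 1); omega⟩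
      rw [hc, List.replicate_succ, List.flatten_cons, List.append_assoc]
      exact ⟨_, rfl⟩
    exact (List.dropLast_prefix _).trans (this.trans ⟨_, rfl⟩)

theorem short_word_is_subword
    (α : ℝ) (hirr : Irrational α) (hα : α ∈ Set.Ioo (0 : ℝ) 1)
    (w : List ℝ) (hw : w ∈ Walpha α) (n : ℕ) (hn : 2 ≤ n)
    (hlen : w.length < (sWord (cfCoeff α) (n + 1)).length) :
    w <:+: sWord (cfCoeff α) (n + 3) := by
  obtain ⟨h0, h1⟩ := hα
  obtain ⟨θ, _, _, k, hk⟩ := hw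
  obtain ⟨m, rfl⟩ : ∃ m, n = m + 2 := ⟨n - 2, by omega⟩
  have ha : ∀ k, 1 ≤ cfCoeff α (k + 1) := fun k => coeff_pos k α hirr h0 h1
  obtain ⟨θ', hg, he⟩ := perturb α θ h0 h1 k w.length
  obtain ⟨B, hB, hwB⟩ := blocks (m + 1) α θ' hirr h0 h1 hg k w.length
  rw [← he] at hwB
  replace hk : w = wd (sturmian α θ) k w.length := by
    refine hk.trans ?_
    simp [wd, List.map_flatMap, List.flatMap_def, Function.comp_def]
    generalize List.range w.length = l
    induction l with
    | nil => rfl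
    | cons x l ih => simp [ih]
  rw [← hk] at hwB
  have hc := two_blocks (sWord (cfCoeff α) (m + 3)) (sWord (cfCoeff α) (m + 2)) w hlen B hB
    (hwB.trans (List.prefix_append _ _).isInfix)
  have big : sWord (cfCoeff α) (m + 3) ++ sWord (cfCoeff α) (m + 2) ++ sWord (cfCoeff α) (m + 3)
      <:+: sWord (cfCoeff α) (m + 5) := by
    have e5 : sWord (cfCoeff α) (m + 5) = (List.replicate (cfCoeff α (m + 4))
      (sWord (cfCoeff α) (m + 4))).flatten ++ sWord (cfCoeff α) (m + 3) := by
      rw [show m + 5 = (m + 2) + 3 from rfl, sWord]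
    have e4 : sWord (cfCoeff α) (m + 4) = (List.replicate (cfCoeff α (m + 3))
      (sWord (cfCoeff α) (m + 3))).flatten ++ sWord (cfCoeff α) (m + 2) := by
      rw [show m + 4 = (m + 1) + 3 from rfl, sWord]
    have s5 := rep_suffix (cfCoeff α (m + 4)) (ha (m + 3)) (sWord (cfCoeff α) (m + 4))
      (sWord (cfCoeff α) (m + 3))
    have s4 := rep_suffix (cfCoeff α (m + 3)) (ha (m + 2)) (sWord (cfCoeff α) (m + 3))
      (sWord (cfCoeff α) (m + 2))
    rw [← e5] at s5
    rw [← e4] at s4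
    obtain ⟨z, hz⟩ := s4
    refine List.IsInfix.trans ?_ s5.isInfix
    rw [← hz]
    exact ⟨z, [], by simp⟩
  rcases hc with hc | hc
  · have h2 := square _ _ hlen hc
    obtain ⟨r, hr⟩ := dropLast_prefix (cfCoeff α) ha m
    refine h2.trans (List.IsInfix.trans ?_ big)
    rw [List.append_assoc, ← hr]
    exact ⟨[], r, by simp⟩
  · exact hc.trans big
end

section
/- Let n ≥ 1 and let w be a subword of s_n. Then there exist words x, y over {0,1} with x w y = s_{n+3} and |x| ≥ |s_{n+1}| and |y| ≥ |s_{n+1}|. -/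
open scoped Classical

theorem cfGauss_irr (α : ℝ) (hirr : Irrational α) (hα : α ∈ Set.Ioo (0 : ℝ) 1) (k : ℕ) :
    Irrational (cfGauss α k) ∧ cfGauss α k ∈ Set.Ioo (0 : ℝ) 1 := by
  induction k with
  | zero => exact ⟨hirr, hα⟩
  | succ k ih =>
    have h : Irrational (cfGauss α (k + 1)) := by
      show Irrational (Int.fract (cfGauss α k)⁻¹)
      rw [Int.fract]
      exact ih.1.inv.sub_intCast _
    refine ⟨h, lt_of_le_of_ne (Int.fract_nonneg _) ?_, Int.fract_lt_one _⟩
    exact fun h0 => h.ne_zero h0.symm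

theorem cfCoeff_pos (α : ℝ) (hirr : Irrational α) (hα : α ∈ Set.Ioo (0 : ℝ) 1) (k : ℕ) :
    1 ≤ cfCoeff α k := by
  obtain ⟨-, h0, h1⟩ := cfGauss_irr α hirr hα (k - 1)
  unfold cfCoeff
  apply Nat.le_floor
  rw [Nat.cast_one]
  exact (one_le_inv₀ h0).2 h1.le

theorem subword_extends_with_margins
    (α : ℝ) (hirr : Irrational α) (hα : α ∈ Set.Ioo (0 : ℝ) 1)
    (n : ℕ) (hn : 1 ≤ n) (w : List ℝ) (hw : w <:+: sWord (cfCoeff α) (n + 1)) :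
    ∃ x y : List ℝ, x ++ w ++ y = sWord (cfCoeff α) (n + 4) ∧
      (sWord (cfCoeff α) (n + 2)).length ≤ x.length ∧
      (sWord (cfCoeff α) (n + 2)).length ≤ y.length := by
  obtain ⟨u, v, huv⟩ := hw
  obtain ⟨b, hb⟩ := Nat.exists_eq_add_of_le' (cfCoeff_pos α hirr hα (n + 2))
  obtain ⟨c, hc⟩ := Nat.exists_eq_add_of_le' (cfCoeff_pos α hirr hα (n + 3))
  have hC : sWord (cfCoeff α) (n + 3) =
      (List.replicate (b + 1) (sWord (cfCoeff α) (n + 2))).flatten ++ sWord (cfCoeff α) (n + 1) := by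
    rw [← hb, sWord]
  have hD : sWord (cfCoeff α) (n + 4) =
      (List.replicate (c + 1) (sWord (cfCoeff α) (n + 3))).flatten ++ sWord (cfCoeff α) (n + 2) := by
    rw [← hc, sWord]
  refine ⟨(List.replicate c (sWord (cfCoeff α) (n + 3))).flatten ++
    (List.replicate (b + 1) (sWord (cfCoeff α) (n + 2))).flatten ++ u,
    v ++ sWord (cfCoeff α) (n + 2), ?_, ?_, ?_⟩
  · rw [hD, List.replicate_succ' (n := c), List.flatten_append, List.flatten_singleton]
    nth_rewrite 3 [hC]
    rw [← huv]
    simp only [List.append_assoc]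
  · rw [List.replicate_succ]
    simp only [List.length_append, List.flatten_cons]
    omega
  · simp
end
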